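/- Let $X_n \sim \mathrm{Bin}(n,p)$ with $n$ a positive integer and $p \in (0,1)$. Then for every positive integer $k$ with $np < k \le n$, one has $\frac{\mathbb{P}[X_n \ge k+1]}{\mathbb{P}[X_n \ge k]} \le \frac{p(n-k)}{(k+1)(1-p)}$. -/

import Mathlib

/-- The binomial probability mass function: `P[Bin(n,p) = i] = C(n,i) p^i (1-p)^(n-i)`. -/
noncomputable def binPMF (n : ℕ) (p : ℝ) (i : ℕ) : ℝ :=
  (n.choose i : ℝ) * p ^ i * (1 - p) ^ (n - i)

/-- The binomial tail probability `P[Bin(n,p) ≥ k]`. -/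
noncomputable def binTail (n : ℕ) (p : ℝ) (k : ℕ) : ℝ :=
  ∑ i ∈ Finset.Icc k n, binPMF n p i

/-- The tail conditional expectation `E[Bin(n,p) | Bin(n,p) ≥ k]`,
i.e. `E[X · 1_{X ≥ k}] / P[X ≥ k]`. -/
noncomputable def binTCE (n : ℕ) (p : ℝ) (k : ℕ) : ℝ :=
  (∑ i ∈ Finset.Icc k n, (i : ℝ) * binPMF n p i) / binTail n p k

/-!
The ratio `P[X = i + 1] / P[X = i] = p (n - i) / ((i + 1) (1 - p))` of consecutive binomial
probabilities decreases in `i`, so for `i ≥ k` it is at most its value at `i = k`. Summing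
`P[X = i + 1] ≤ p (n - k) / ((k + 1) (1 - p)) * P[X = i]` over `i ≥ k` compares the two tails.
-/

section

variable {n i k : ℕ} {p : ℝ}

theorem binPMF_nonneg (hp : 0 ≤ p) (hp1 : p ≤ 1) : 0 ≤ binPMF n p i := by
  have : 0 ≤ 1 - p := sub_nonneg.mpr hp1
  unfold binPMF
  positivity

theorem binPMF_pos (hp : 0 < p) (hp1 : p < 1) (hin : i ≤ n) : 0 < binPMF n p i := by
  have : 0 < 1 - p := sub_pos.mpr hp1
  have hchoose : 0 < n.choose i := Nat.choose_pos hin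
  unfold binPMF
  positivity

theorem binPMF_eq_zero_of_lt (hni : n < i) : binPMF n p i = 0 := by
  simp [binPMF, Nat.choose_eq_zero_of_lt hni]

theorem binPMF_succ_mul (n : ℕ) (p : ℝ) (i : ℕ) :
    binPMF n p (i + 1) * ((i + 1) * (1 - p)) = p * (n - i) * binPMF n p i := by
  rcases lt_trichotomy i n with hin | rfl | hni
  · have hchoose : (n.choose (i + 1) : ℝ) * (i + 1) = n.choose i * (n - i) := by
      rw [← Nat.cast_sub hin.le]
      exact_mod_cast Nat.choose_succ_right_eq n i
    have hexp : n - i = n - (i + 1) + 1 := by lia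
    rw [binPMF, binPMF, hexp]
    linear_combination p ^ (i + 1) * (1 - p) ^ (n - (i + 1) + 1) * hchoose
  · simp [binPMF_eq_zero_of_lt]
  · simp [binPMF_eq_zero_of_lt, hni, hni.trans]

theorem binTail_pos (hp : 0 < p) (hp1 : p < 1) (hkn : k ≤ n) : 0 < binTail n p k :=
  Finset.sum_pos (fun _ hi => binPMF_pos hp hp1 (Finset.mem_Icc.mp hi).2)
    (Finset.nonempty_Icc.mpr hkn)

theorem binTail_succ_eq_sum_binPMF_succ (n : ℕ) (p : ℝ) (k : ℕ) :
    binTail n p (k + 1) = ∑ i ∈ Finset.Icc k n, binPMF n p (i + 1) := by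
  have hshift : ∑ i ∈ Finset.Icc k n, binPMF n p (i + 1) =
      ∑ i ∈ Finset.Icc (k + 1) (n + 1), binPMF n p i := by
    simp [← Finset.map_add_right_Icc]
  rw [hshift, binTail]
  refine Finset.sum_subset (Finset.Icc_subset_Icc_right n.le_succ) fun i hi hi' => ?_
  exact binPMF_eq_zero_of_lt (by grind)

theorem binPMF_succ_mul_le (hp : 0 ≤ p) (hp1 : p ≤ 1) (hki : k ≤ i) :
    binPMF n p (i + 1) * ((k + 1) * (1 - p)) ≤ p * (n - k) * binPMF n p i := by
  have : 0 ≤ 1 - p := sub_nonneg.mpr hp1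
  have hpmf (j : ℕ) : 0 ≤ binPMF n p j := binPMF_nonneg hp hp1
  calc binPMF n p (i + 1) * ((k + 1) * (1 - p))
      ≤ binPMF n p (i + 1) * ((i + 1) * (1 - p)) := by
        gcongr
        exact hpmf _
    _ = p * (n - i) * binPMF n p i := binPMF_succ_mul n p i
    _ ≤ p * (n - k) * binPMF n p i := by
        gcongr
        exact hpmf _

theorem binTail_succ_mul_le (n k : ℕ) (hp : 0 ≤ p) (hp1 : p ≤ 1) :
    binTail n p (k + 1) * ((k + 1) * (1 - p)) ≤ p * (n - k) * binTail n p k := by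
  rw [binTail_succ_eq_sum_binPMF_succ, binTail, Finset.sum_mul, Finset.mul_sum]
  exact Finset.sum_le_sum fun _ hi => binPMF_succ_mul_le hp hp1 (Finset.mem_Icc.mp hi).1

theorem binomial_tail_ratio_bound_sharp_general (hp : 0 < p) (hp1 : p < 1) (hkn : k ≤ n) :
    binTail n p (k + 1) / binTail n p k ≤ p * (n - k) / ((k + 1) * (1 - p)) := by
  have : 0 < 1 - p := sub_pos.mpr hp1
  rw [div_le_div_iff₀ (binTail_pos hp hp1 hkn) (by positivity)]
  exact binTail_succ_mul_le n k hp.le hp1.le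

end

theorem binomial_tail_ratio_bound_sharp
    (n k : ℕ) (p : ℝ) (hn : 0 < n) (hp : 0 < p) (hp1 : p < 1)
    (hk : 0 < k) (hlow : (n : ℝ) * p < k) (hkn : k ≤ n) :
    binTail n p (k + 1) / binTail n p k ≤
      p * ((n : ℝ) - k) / (((k : ℝ) + 1) * (1 - p)) :=
  binomial_tail_ratio_bound_sharp_general hp hp1 hkn
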